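/- The set 𝒢 of all compact geodesic metric spaces is path-connected as a subspace of the Gromov–Hausdorff space, and every nonempty open subset of 𝒢 (in the subspace topology) has infinite covering dimension. -/

import Mathlib

open GromovHausdorff

/-- A topological space has covering dimension at most `n` if every open cover
admits an open refinement that still covers the space and in which every point
lies in at most `n + 1` members of the refinement. -/
def CovDimLE (X : Type*) [TopologicalSpace X] (n : ℕ) : Prop :=
  ∀ U : Set (Set X), (∀ u ∈ U, IsOpen u) → ⋃₀ U = Set.univ →
    ∃ V : Set (Set X), (∀ w ∈ V, IsOpen w) ∧ ⋃₀ V = Set.univ ∧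
      (∀ w ∈ V, ∃ u ∈ U, w ⊆ u) ∧
      ∀ x : X, {w ∈ V | x ∈ w}.encard ≤ (n : ℕ∞) + 1

/-- A metric space is *geodesic* if any two points `x, y` are joined by a
geodesic, i.e. a map `γ : [0,1] → X` with `γ 0 = x`, `γ 1 = y` and
`dist (γ s) (γ t) = |s - t| * dist x y`. -/
def IsGeodesicSpace (X : Type*) [MetricSpace X] : Prop :=
  ∀ x y : X, ∃ γ : ℝ → X, γ 0 = x ∧ γ 1 = y ∧
    ∀ s ∈ Set.Icc (0 : ℝ) 1, ∀ t ∈ Set.Icc (0 : ℝ) 1,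
      dist (γ s) (γ t) = |s - t| * dist x y

/-- The subset `𝒢` of the Gromov–Hausdorff space consisting of (isometry
classes of) compact geodesic metric spaces. -/
def GHGeodesic : Set GHSpace := {p | IsGeodesicSpace p.Rep}

/-!
A compact geodesic space sits isometrically in a normed space, and rescaling it there by
`c ∈ [0, 1]` is a path in `𝒢` to the one-point space.

For the dimension, `X × [0, δ]²` is geodesic, is close to `X`, and arbitrarily close to each of its
points `q` has two points at the same distance from `q`. This fails at the free ends of segments
glued to it, so the metric singles out these ends, and the set of lengths of `N` short segments
glued to `X × [0, δ]²` is an isometry invariant.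
Letting the lengths vary in pairwise disjoint intervals embeds an `N`-cube in any nonempty open
subset of `𝒢`. By Lebesgue's covering theorem, proved here by counting Sperner labels modulo 2 on
Kuhn's triangulation, a Hausdorff space containing an `N`-cube has covering dimension at least `N`.
-/

/-- The number modulo 2 of ways in which `f` is a bijection, i.e. `1` if `f` is bijective and `0`
otherwise; the determinant form makes the count of doors a Laplace expansion. -/
def rainbowParity {k : ℕ} (f : Fin k → Fin k) : ZMod 2 :=
  ((1 : Matrix (Fin k) (Fin k) (ZMod 2)).submatrix f id).det

/-- `1` if the labelling `f` of a facet is a door, that is, takes every label except `0`, and `0`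
otherwise. -/
def doorParity {k : ℕ} (f : Fin k → Fin (k + 1)) : ZMod 2 :=
  ((1 : Matrix (Fin (k + 1)) (Fin (k + 1)) (ZMod 2)).submatrix f Fin.succ).det

lemma rainbowParity_eq_sum_doorParity {k : ℕ} (f : Fin (k + 1) → Fin (k + 1)) :
    rainbowParity f = ∑ i : Fin (k + 1), doorParity (f ∘ i.succAbove) := by
  -- Adding all columns to column `0` turns it into the all-ones column; then expand along it.
  have hcol := Matrix.det_updateCol_sum
    ((1 : Matrix (Fin (k + 1)) (Fin (k + 1)) (ZMod 2)).submatrix f id) 0 (fun _ => 1)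
  rw [one_smul] at hcol
  rw [rainbowParity, ← hcol, Matrix.det_succ_column_zero]
  refine Finset.sum_congr rfl fun i _ => ?_
  have hsign : (-1 : ZMod 2) = 1 := by decide
  simp only [hsign, one_pow, one_mul, Matrix.updateCol_self, one_smul, Matrix.submatrix_apply,
    Matrix.one_apply, id, Finset.sum_ite_eq, Finset.mem_univ, if_true]
  rfl

lemma doorParity_succ_comp {k : ℕ} (g : Fin k → Fin k) :
    doorParity (Fin.succ ∘ g) = rainbowParity g := by
  rw [doorParity, rainbowParity]
  congr 1
  ext a l
  simp [Matrix.one_apply]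

lemma doorParity_eq_zero {k : ℕ} {f : Fin k → Fin (k + 1)} (l : Fin k)
    (hf : ∀ a, f a ≠ l.succ) : doorParity f = 0 :=
  Matrix.det_eq_zero_of_column_eq_zero l fun a => Matrix.one_apply_ne (hf a)

lemma surjective_of_rainbowParity_ne_zero {k : ℕ} {f : Fin k → Fin k}
    (hf : rainbowParity f ≠ 0) : Function.Surjective f := by
  intro l
  by_contra! hl
  exact hf (Matrix.det_eq_zero_of_column_eq_zero l fun a => Matrix.one_apply_ne (hl a))

section KuhnTriangulation

variable {N : ℕ}

/-- The vertices of the simplices of Kuhn's triangulation of `ℕ ^ N`: the simplex with lowest corner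
`x` and permutation `π` is listed from the top, its `i`-th vertex adding `1` to exactly the
coordinates `d` with `i ≤ π d`. -/
def kuhnVertex (x : Fin N → ℕ) (π : Equiv.Perm (Fin N)) (i : Fin (N + 1)) : Fin N → ℕ :=
  fun d => x d + if (i : ℕ) ≤ π d then 1 else 0

lemma le_kuhnVertex (x : Fin N → ℕ) (π : Equiv.Perm (Fin N)) (i : Fin (N + 1)) :
    x ≤ kuhnVertex x π i := fun _ => Nat.le_add_right _ _

lemma kuhnVertex_le (x : Fin N → ℕ) (π : Equiv.Perm (Fin N)) (i : Fin (N + 1)) :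
    kuhnVertex x π i ≤ x + 1 := by
  intro d
  simp only [kuhnVertex, Pi.add_apply, Pi.one_apply]
  split_ifs <;> lia

lemma kuhnVertex_succ_symm_zero (x : Fin (N + 1) → ℕ) (π : Equiv.Perm (Fin (N + 1)))
    (a : Fin (N + 1)) : kuhnVertex x π a.succ (π.symm 0) = x (π.symm 0) := by
  simp [kuhnVertex]

lemma kuhnVertex_swap_mul (x : Fin (N + 1) → ℕ) (π : Equiv.Perm (Fin (N + 1))) (k : Fin N)
    {i : Fin (N + 2)} (hi : i ≠ k.succ.castSucc) :
    kuhnVertex x (Equiv.swap k.castSucc k.succ * π) i = kuhnVertex x π i := by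
  have hi' : (i : ℕ) ≠ k + 1 := fun h => hi (Fin.ext (by simpa using h))
  funext d
  simp only [kuhnVertex, Equiv.Perm.mul_apply, Equiv.swap_apply_def]
  congr 2
  rw [eq_iff_iff]
  split_ifs with hk hk' <;> simp only [*, Fin.val_castSucc, Fin.val_succ] <;> lia

lemma kuhnVertex_castSucc_eq (x : Fin (N + 1) → ℕ) (π : Equiv.Perm (Fin (N + 1)))
    (a : Fin (N + 1)) :
    kuhnVertex x π a.castSucc =
      kuhnVertex (x + Pi.single (π.symm (Fin.last N)) 1) (finRotate (N + 1) * π) a.succ := by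
  funext d
  have ha : (a : ℕ) ≤ N := Fin.is_le a
  rcases eq_or_ne (π d) (Fin.last N) with h | h
  · obtain rfl : d = π.symm (Fin.last N) := by rw [← h, Equiv.symm_apply_apply]
    simp [kuhnVertex, ha]
  · have hd : d ≠ π.symm (Fin.last N) := fun h' => h (by rw [h', Equiv.apply_symm_apply])
    simp only [kuhnVertex, Pi.add_apply, Pi.single_eq_of_ne hd, Equiv.Perm.mul_apply,
      coe_finRotate_of_ne_last h, Fin.val_castSucc, Fin.val_succ, add_le_add_iff_right, add_zero]

lemma kuhnVertex_cons (m : ℕ) (y : Fin N → ℕ) (π : Equiv.Perm (Fin N)) (a : Fin (N + 1)) :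
    kuhnVertex (Fin.cons m y : Fin (N + 1) → ℕ) (Equiv.Perm.decomposeFin.symm (0, π)) a.succ =
      Fin.cons m (kuhnVertex y π a) := by
  funext d
  refine Fin.cases ?_ (fun d => ?_) d <;> simp [kuhnVertex]

lemma sum_box_single_telescope {A : Type*} [AddCommGroup A] (m : ℕ) (j : Fin (N + 1))
    (G : (Fin (N + 1) → ℕ) → A) :
    ∑ x ∈ Fintype.piFinset (fun _ : Fin (N + 1) => Finset.range m),
      (G (x + Pi.single j 1) - G x) =
    ∑ y ∈ Fintype.piFinset (fun _ : Fin N => Finset.range m),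
      (G (j.insertNth m y) - G (j.insertNth 0 y)) := by
  have hshift (t : ℕ) (y : Fin N → ℕ) :
      (j.insertNth t y + Pi.single j 1 : Fin (N + 1) → ℕ) = j.insertNth (t + 1) y := by
    funext d
    rcases Fin.eq_self_or_eq_succAbove j d with rfl | ⟨i, rfl⟩ <;> simp
  calc _ = ∑ q ∈ Finset.range m ×ˢ Fintype.piFinset (fun _ : Fin N => Finset.range m),
        (G (j.insertNth (q.1 + 1) q.2) - G (j.insertNth q.1 q.2)) := by
        refine (Finset.sum_equiv (Fin.insertNthEquiv (fun _ => ℕ) j) (fun q => ?_)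
          fun q _ => ?_).symm
        · simp [Fin.forall_iff_succAbove j]
        · simp [Fin.insertNthEquiv, hshift]
    _ = _ := by
        rw [Finset.sum_product_right]
        exact Finset.sum_congr rfl fun y _ =>
          Finset.sum_range_sub (fun t => G (j.insertNth t y)) m

/-- The parity of doors on the facet opposite to the `i`-th vertex of a Kuhn simplex. -/
def facetDoorParity (ℓ : (Fin (N + 1) → ℕ) → Fin (N + 2)) (i : Fin (N + 2))
    (x : Fin (N + 1) → ℕ) (π : Equiv.Perm (Fin (N + 1))) : ZMod 2 :=
  doorParity (ℓ ∘ kuhnVertex x π ∘ i.succAbove)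

lemma sum_facetDoorParity_inner (ℓ : (Fin (N + 1) → ℕ) → Fin (N + 2)) (k : Fin N)
    (x : Fin (N + 1) → ℕ) : ∑ π, facetDoorParity ℓ k.succ.castSucc x π = 0 := by
  -- The two simplices of a cube that share an inner facet are exchanged by an adjacent swap.
  refine Finset.sum_involution (fun π _ => Equiv.swap k.castSucc k.succ * π) (fun π _ => ?_)
    (fun π _ _ hfix => ?_) (fun _ _ => Finset.mem_univ _) fun π _ => by simp [← mul_assoc]
  · have hfacet : facetDoorParity ℓ k.succ.castSucc x (Equiv.swap k.castSucc k.succ * π) =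
        facetDoorParity ℓ k.succ.castSucc x π :=
      congrArg (fun v => doorParity (ℓ ∘ v)) <| funext fun a =>
        kuhnVertex_swap_mul x π k (Fin.succAbove_ne _ a)
    rw [hfacet, CharTwo.add_self_eq_zero]
  · have hswap := Equiv.swap_eq_one_iff.mp (mul_eq_right.mp hfix)
    exact Fin.castSucc_lt_succ.ne hswap

lemma facetDoorParity_last (ℓ : (Fin (N + 1) → ℕ) → Fin (N + 2)) (x : Fin (N + 1) → ℕ)
    (π : Equiv.Perm (Fin (N + 1))) :
    facetDoorParity ℓ (Fin.last _) x π = facetDoorParity ℓ 0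
      (x + Pi.single ((finRotate (N + 1) * π).symm 0) 1) (finRotate (N + 1) * π) := by
  have hlast : (finRotate (N + 1) * π).symm 0 = π.symm (Fin.last N) := by
    simp [Equiv.symm_apply_eq]
  simp only [facetDoorParity, hlast]
  congr 2
  funext a
  simp only [Function.comp_apply, Fin.succAbove_last, Fin.succAbove_zero, kuhnVertex_castSucc_eq]

lemma facetDoorParity_zero_eq_zero {ℓ : (Fin (N + 1) → ℕ) → Fin (N + 2)} {x : Fin (N + 1) → ℕ}
    {π : Equiv.Perm (Fin (N + 1))} (l : Fin (N + 1))
    (hl : ∀ z, z (π.symm 0) = x (π.symm 0) → ℓ z ≠ l.succ) : facetDoorParity ℓ 0 x π = 0 :=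
  doorParity_eq_zero l fun a => hl _ <| by
    simp only [Function.comp_apply, Fin.succAbove_zero, kuhnVertex_succ_symm_zero]

lemma sum_rainbowParity_eq_sum_facetDoorParity_zero (ℓ : (Fin (N + 1) → ℕ) → Fin (N + 2))
    (x : Fin (N + 1) → ℕ) :
    ∑ π, rainbowParity (ℓ ∘ kuhnVertex x π) =
      ∑ π : Equiv.Perm (Fin (N + 1)),
        (facetDoorParity ℓ 0 (x + Pi.single (π.symm 0) 1) π - facetDoorParity ℓ 0 x π) := by
  have hlast : ∑ π, facetDoorParity ℓ (Fin.last _) x π =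
      ∑ π : Equiv.Perm (Fin (N + 1)), facetDoorParity ℓ 0 (x + Pi.single (π.symm 0) 1) π :=
    Finset.sum_equiv (Equiv.mulLeft (finRotate (N + 1))) (by simp)
      fun π _ => facetDoorParity_last ℓ x π
  calc ∑ π, rainbowParity (ℓ ∘ kuhnVertex x π)
      = ∑ i, ∑ π, facetDoorParity ℓ i x π := by
        rw [Finset.sum_comm]
        exact Finset.sum_congr rfl fun π _ => rainbowParity_eq_sum_doorParity _
    _ = ∑ π, facetDoorParity ℓ 0 x π + ∑ π, facetDoorParity ℓ (Fin.last _) x π := by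
        simp only [Fin.sum_univ_castSucc (n := N + 1), Fin.sum_univ_succ (n := N),
          sum_facetDoorParity_inner, Finset.sum_const_zero, add_zero, Fin.castSucc_zero]
    _ = _ := by rw [hlast, Finset.sum_sub_distrib, CharTwo.sub_eq_add, add_comm]

/-- The boundary condition of the cubical Sperner lemma on `{0, …, m} ^ N`: the label `j + 1` is
forbidden on the face `x j = 0`, and the label `j` on the face `x j = m`. -/
structure IsKuhnLabelling (m : ℕ) (ℓ : (Fin N → ℕ) → Fin (N + 1)) : Prop where
  ne_succ : ∀ x j, x j = 0 → ℓ x ≠ j.succ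
  ne_castSucc : ∀ x j, x j = m → ℓ x ≠ j.castSucc

lemma IsKuhnLabelling.exists_restrict {m : ℕ} {ℓ : (Fin (N + 1) → ℕ) → Fin (N + 2)}
    (h : IsKuhnLabelling m ℓ) :
    ∃ ℓ' : (Fin N → ℕ) → Fin (N + 1),
      IsKuhnLabelling m ℓ' ∧ ∀ y, ℓ (Fin.cons m y) = (ℓ' y).succ := by
  have hne (y : Fin N → ℕ) : ℓ (Fin.cons m y) ≠ 0 := h.ne_castSucc _ 0 rfl
  refine ⟨fun y => (ℓ (Fin.cons m y)).pred (hne y), ⟨fun y j hy hj => ?_, fun y j hy hj => ?_⟩,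
    fun y => (Fin.succ_pred _ _).symm⟩
  · rw [Fin.pred_eq_iff_eq_succ] at hj
    exact h.ne_succ _ j.succ (by simpa using hy) hj
  · rw [Fin.pred_eq_iff_eq_succ, Fin.succ_castSucc] at hj
    exact h.ne_castSucc _ j.succ (by simpa using hy) hj

lemma IsKuhnLabelling.facetDoorParity_insertNth_zero {m : ℕ}
    {ℓ : (Fin (N + 1) → ℕ) → Fin (N + 2)}
    (h : IsKuhnLabelling m ℓ) (π : Equiv.Perm (Fin (N + 1))) (y : Fin N → ℕ) :
    facetDoorParity ℓ 0 ((π.symm 0).insertNth 0 y) π = 0 :=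
  facetDoorParity_zero_eq_zero (π.symm 0) fun z hz => h.ne_succ z _ (by simpa using hz)

lemma IsKuhnLabelling.facetDoorParity_insertNth_of_ne_zero {m : ℕ}
    {ℓ : (Fin (N + 1) → ℕ) → Fin (N + 2)}
    (h : IsKuhnLabelling m ℓ) {π : Equiv.Perm (Fin (N + 1))} (hπ : π.symm 0 ≠ 0)
    (y : Fin N → ℕ) : facetDoorParity ℓ 0 ((π.symm 0).insertNth m y) π = 0 := by
  obtain ⟨l, hl⟩ := Fin.exists_succ_eq.mpr hπ
  refine facetDoorParity_zero_eq_zero l.castSucc fun z hz => ?_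
  rw [Fin.succ_castSucc, hl]
  exact h.ne_castSucc z _ (by simpa using hz)

lemma facetDoorParity_cons_of_restrict {m : ℕ} {ℓ : (Fin (N + 1) → ℕ) → Fin (N + 2)}
    {ℓ' : (Fin N → ℕ) → Fin (N + 1)} (hℓ' : ∀ y, ℓ (Fin.cons m y) = (ℓ' y).succ)
    (y : Fin N → ℕ) (π : Equiv.Perm (Fin N)) :
    facetDoorParity ℓ 0 (Fin.cons m y) (Equiv.Perm.decomposeFin.symm (0, π)) =
      rainbowParity (ℓ' ∘ kuhnVertex y π) := by
  rw [← doorParity_succ_comp]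
  refine congrArg doorParity (funext fun a => ?_)
  simp only [Function.comp_apply, Fin.succAbove_zero, kuhnVertex_cons, hℓ']

theorem IsKuhnLabelling.sum_rainbowParity {m : ℕ} {ℓ : (Fin N → ℕ) → Fin (N + 1)}
    (h : IsKuhnLabelling m ℓ) :
    ∑ x ∈ Fintype.piFinset (fun _ : Fin N => Finset.range m),
      ∑ π, rainbowParity (ℓ ∘ kuhnVertex x π) = 1 := by
  induction N with
  | zero =>
    simp [rainbowParity, Matrix.det_unique, Matrix.one_apply, Subsingleton.elim (_ : Fin 1) 0]
  | succ N ih =>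
    obtain ⟨ℓ', h', hℓ'⟩ := h.exists_restrict
    have hsymm (i : Fin (N + 1)) (π : Equiv.Perm (Fin N)) :
        (Equiv.Perm.decomposeFin.symm (i, π)).symm 0 = 0 ↔ i = 0 := by
      rw [Equiv.symm_apply_eq, Equiv.Perm.decomposeFin_symm_apply_zero, eq_comm]
    calc _ = ∑ π : Equiv.Perm (Fin (N + 1)),
          ∑ y ∈ Fintype.piFinset (fun _ : Fin N => Finset.range m),
            facetDoorParity ℓ 0 ((π.symm 0).insertNth m y) π := by
          simp only [sum_rainbowParity_eq_sum_facetDoorParity_zero]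
          rw [Finset.sum_comm]
          refine Finset.sum_congr rfl fun π _ => ?_
          rw [sum_box_single_telescope m (π.symm 0) fun x => facetDoorParity ℓ 0 x π]
          simp only [h.facetDoorParity_insertNth_zero, sub_zero]
      _ = ∑ π : Equiv.Perm (Fin N),
          ∑ y ∈ Fintype.piFinset (fun _ : Fin N => Finset.range m),
            facetDoorParity ℓ 0 (Fin.cons m y) (Equiv.Perm.decomposeFin.symm (0, π)) := by
          rw [← Equiv.sum_comp Equiv.Perm.decomposeFin.symm, Fintype.sum_prod_type,
            Fintype.sum_eq_single 0 fun i hi => Finset.sum_eq_zero fun π _ =>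
              Finset.sum_eq_zero fun y _ =>
                h.facetDoorParity_insertNth_of_ne_zero (mt (hsymm i π).mp hi) y]
          simp only [(hsymm 0 _).mpr rfl, Fin.insertNth_zero']
      _ = 1 := by
          rw [Finset.sum_comm, ← ih h']
          simp only [facetDoorParity_cons_of_restrict hℓ']

theorem IsKuhnLabelling.exists_rainbow {m : ℕ} {ℓ : (Fin N → ℕ) → Fin (N + 1)}
    (h : IsKuhnLabelling m ℓ) :
    ∃ x : Fin N → ℕ, ∀ l, ∃ z, x ≤ z ∧ z ≤ x + 1 ∧ ℓ z = l := by
  have hsum : ∑ x ∈ Fintype.piFinset (fun _ : Fin N => Finset.range m),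
      ∑ π, rainbowParity (ℓ ∘ kuhnVertex x π) ≠ 0 := by
    rw [h.sum_rainbowParity]
    exact one_ne_zero
  obtain ⟨x, -, hx⟩ := Finset.exists_ne_zero_of_sum_ne_zero hsum
  obtain ⟨π, -, hπ⟩ := Finset.exists_ne_zero_of_sum_ne_zero hx
  refine ⟨x, fun l => ?_⟩
  obtain ⟨i, hi⟩ := surjective_of_rainbowParity_ne_zero hπ l
  exact ⟨kuhnVertex x π i, le_kuhnVertex x π i, kuhnVertex_le x π i, hi⟩

end KuhnTriangulation

section LebesgueCovering

variable {N : ℕ}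

/-- The point of the unit cube with coordinates `z d / m`, clamped to `[0, 1]`. -/
noncomputable def gridPoint (m : ℕ) (z : Fin N → ℕ) : Fin N → unitInterval :=
  fun d => Set.projIcc 0 1 zero_le_one ((z d : ℝ) / m)

lemma gridPoint_apply_eq_zero {m : ℕ} {z : Fin N → ℕ} {j : Fin N} (hz : z j = 0) :
    gridPoint m z j = 0 := by
  simp [gridPoint, hz]

lemma gridPoint_apply_eq_one {m : ℕ} (hm : m ≠ 0) {z : Fin N → ℕ} {j : Fin N} (hz : z j = m) :
    gridPoint m z j = 1 := by
  rw [gridPoint, hz, div_self (Nat.cast_ne_zero.mpr hm)]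
  exact Set.projIcc_right (zero_le_one (α := ℝ))

lemma dist_gridPoint_le {m : ℕ} {x z : Fin N → ℕ} (hxz : x ≤ z) (hzx : z ≤ x + 1) :
    dist (gridPoint m x) (gridPoint m z) ≤ 1 / m := by
  refine (dist_pi_le_iff (by positivity)).mpr fun d => ?_
  have hle : (x d : ℝ) ≤ z d := mod_cast hxz d
  have hle' : (z d : ℝ) ≤ x d + 1 := mod_cast hzx d
  calc dist (gridPoint m x d) (gridPoint m z d) ≤ |(x d : ℝ) / m - z d / m| :=
        Set.abs_projIcc_sub_projIcc zero_le_one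
    _ = |(x d : ℝ) - z d| / m := by rw [← sub_div, abs_div, Nat.abs_cast]
    _ ≤ 1 / m := by
        gcongr
        exact abs_le.mpr ⟨by linarith, by linarith⟩

lemma exists_label_ne_succ_and_ne_castSucc {P Q : Fin N → Prop} (h : ∀ j, ¬(P j ∧ Q j)) :
    ∃ c : Fin (N + 1), (∀ j, P j → c ≠ j.succ) ∧ ∀ j, Q j → c ≠ j.castSucc := by
  induction N with
  | zero => exact ⟨0, fun j => j.elim0, fun j => j.elim0⟩
  | succ N ih =>
    by_cases hQ : Q 0
    · obtain ⟨c, hcP, hcQ⟩ := ih fun j => h j.succ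
      refine ⟨c.succ, Fin.cases (fun hP => (h 0 ⟨hP, hQ⟩).elim) fun j hj => ?_,
        Fin.cases (fun _ => Fin.succ_ne_zero c) fun j hj => ?_⟩
      · exact (Fin.succ_injective _).ne (hcP j hj)
      · exact (Fin.succ_injective _).ne (hcQ j hj)
    · refine ⟨0, fun j _ => (Fin.succ_ne_zero j).symm, fun j hj hj0 => hQ ?_⟩
      rwa [Fin.castSucc_eq_zero_iff.mp hj0.symm] at hj

/-- **Lebesgue's covering theorem**. -/
theorem exists_le_encard_of_cube_cover {ι : Type*} {V : ι → Set (Fin N → unitInterval)}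
    (hopen : ∀ i, IsOpen (V i)) (hcover : ⋃ i, V i = Set.univ)
    (hface : ∀ i j, ¬((∃ a ∈ V i, a j = 0) ∧ ∃ a ∈ V i, a j = 1)) :
    ∃ a, (N + 1 : ℕ∞) ≤ {i | a ∈ V i}.encard := by
  obtain ⟨δ, hδ, hball⟩ := lebesgue_number_lemma_of_metric isCompact_univ hopen hcover.ge
  choose W hW using fun a => hball a (Set.mem_univ a)
  have hself (a) : a ∈ V (W a) := hW a (Metric.mem_ball_self hδ)
  choose c hc_zero hc_one using fun i => exists_label_ne_succ_and_ne_castSucc (hface i)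
  obtain ⟨m, hm⟩ := exists_nat_one_div_lt hδ
  have hlabel : IsKuhnLabelling (m + 1) fun z : Fin N → ℕ => c (W (gridPoint (m + 1) z)) :=
    ⟨fun z j hz => hc_zero _ j ⟨_, hself _, gridPoint_apply_eq_zero hz⟩,
      fun z j hz => hc_one _ j ⟨_, hself _, gridPoint_apply_eq_one m.succ_ne_zero hz⟩⟩
  obtain ⟨x, hx⟩ := hlabel.exists_rainbow
  choose z hxz hzx hz using hx
  have hmem (l) : gridPoint (m + 1) x ∈ V (W (gridPoint (m + 1) (z l))) :=
    hW _ <| (dist_gridPoint_le (hxz l) (hzx l)).trans_lt (mod_cast hm)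
  have hinj : Function.Injective fun l => W (gridPoint (m + 1) (z l)) :=
    Function.LeftInverse.injective (g := c) hz
  refine ⟨gridPoint (m + 1) x, ?_⟩
  calc (N + 1 : ℕ∞) = (Set.range fun l => W (gridPoint (m + 1) (z l))).encard := by
        rw [← Set.image_univ, hinj.encard_image, Set.encard_univ, ENat.card_eq_coe_fintype_card,
          Fintype.card_fin, Nat.cast_add_one]
    _ ≤ _ := Set.encard_le_encard (Set.range_subset_iff.mpr hmem)

theorem not_covDimLE_of_continuous_injective {Y : Type*} [TopologicalSpace Y] [T2Space Y] {n : ℕ}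
    {f : (Fin (n + 1) → unitInterval) → Y} (hf : Continuous f) (hinj : Function.Injective f) :
    ¬ CovDimLE Y n := by
  classical
  intro hdim
  let face (e : unitInterval) (j : Fin (n + 1)) : Set Y := f '' {a | a j = e}
  have hclosed (e j) : IsClosed (face e j) :=
    ((isClosed_eq (continuous_apply j) continuous_const).isCompact.image hf).isClosed
  have hdisj (j) {y} (h0 : y ∈ face 0 j) : y ∉ face 1 j := by
    obtain ⟨a, ha, rfl⟩ := h0
    rw [hinj.mem_set_image, Set.mem_ofPred_eq, ha]
    exact zero_ne_one
  let U (s : Set (Fin (n + 1))) : Set Y := ⋂ j, (face (if j ∈ s then 0 else 1) j)ᶜ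
  obtain ⟨V, hV_open, hV_cover, hV_refine, hV_card⟩ := hdim (Set.range U)
    (Set.forall_mem_range.mpr fun s => isOpen_iInter_of_finite fun j => (hclosed _ j).isOpen_compl)
    (Set.eq_univ_of_forall fun y => by
      refine ⟨_, ⟨{j | y ∉ face 0 j}, rfl⟩, Set.mem_iInter.mpr fun j => ?_⟩
      split_ifs with hj
      exacts [hj, hdisj j (not_not.mp hj)])
  obtain ⟨a, ha⟩ := exists_le_encard_of_cube_cover (V := fun w : V => f ⁻¹' w)
    (fun w => (hV_open w w.2).preimage hf)
    (by rw [← Set.preimage_iUnion, ← Set.sUnion_eq_iUnion, hV_cover, Set.preimage_univ])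
    (by
      rintro ⟨w, hw⟩ j ⟨⟨a, haw, ha⟩, b, hbw, hb⟩
      obtain ⟨_, ⟨s, rfl⟩, hwU⟩ := hV_refine w hw
      have haU := Set.mem_iInter.mp (hwU haw) j
      have hbU := Set.mem_iInter.mp (hwU hbw) j
      split_ifs at haU hbU
      exacts [haU ⟨a, ha, rfl⟩, hbU ⟨b, hb, rfl⟩])
  have hcard : {w : V | f a ∈ (w : Set Y)}.encard ≤ n + 1 := by
    rw [← Subtype.val_injective.encard_image]
    convert hV_card (f a) using 2
    ext w
    simp [and_comm]
  exact absurd (ha.trans hcard) (by norm_cast; lia)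

end LebesgueCovering

section Geodesics

lemma lipschitzOnWith_Icc_union {X : Type*} [PseudoMetricSpace X] {K : NNReal} {f : ℝ → X}
    {a b c : ℝ} (hab : LipschitzOnWith K f (Set.Icc a b))
    (hbc : LipschitzOnWith K f (Set.Icc b c)) :
    LipschitzOnWith K f (Set.Icc a c) := by
  have hle {s t} (hs : s ∈ Set.Icc a c) (ht : t ∈ Set.Icc a c) (hst : s ≤ t) :
      dist (f s) (f t) ≤ K * dist s t := by
    rcases le_total t b with htb | hbt
    · exact hab.dist_le_mul s ⟨hs.1, hst.trans htb⟩ t ⟨ht.1, htb⟩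
    rcases le_total b s with hbs | hsb
    · exact hbc.dist_le_mul s ⟨hbs, hs.2⟩ t ⟨hbt, ht.2⟩
    calc dist (f s) (f t) ≤ dist (f s) (f b) + dist (f b) (f t) := dist_triangle _ _ _
      _ ≤ K * dist s b + K * dist b t := add_le_add
          (hab.dist_le_mul s ⟨hs.1, hsb⟩ b ⟨hs.1.trans hsb, le_rfl⟩)
          (hbc.dist_le_mul b ⟨le_rfl, hbt.trans ht.2⟩ t ⟨hbt, ht.2⟩)
      _ = K * dist s t := by
          rw [← mul_add, dist_add_dist_of_mem_segment (segment_eq_Icc hst ▸ ⟨hsb, hbt⟩)]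
  refine LipschitzOnWith.of_dist_le_mul fun s hs t ht => ?_
  rcases le_total s t with hst | hts
  · exact hle hs ht hst
  · rw [dist_comm, dist_comm s]
    exact hle ht hs hts

lemma dist_eq_of_lipschitzOnWith_one {X : Type*} [PseudoMetricSpace X] {γ : ℝ → X} {d s t : ℝ}
    (hd : dist (γ 0) (γ d) = d) (hγ : LipschitzOnWith 1 γ (Set.Icc 0 d))
    (hs : s ∈ Set.Icc 0 d) (ht : t ∈ Set.Icc 0 d) : dist (γ s) (γ t) = |s - t| := by
  have hle {s t} (hs : s ∈ Set.Icc 0 d) (ht : t ∈ Set.Icc 0 d) : dist (γ s) (γ t) ≤ |s - t| := by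
    simpa [Real.dist_eq] using hγ.dist_le_mul s hs t ht
  have h0 : (0 : ℝ) ∈ Set.Icc 0 d := ⟨le_rfl, hs.1.trans hs.2⟩
  have hd' : d ∈ Set.Icc 0 d := ⟨hs.1.trans hs.2, le_rfl⟩
  wlog hst : s ≤ t generalizing s t
  · rw [dist_comm, abs_sub_comm]
    exact this ht hs (le_of_not_ge hst)
  refine (hle hs ht).antisymm ?_
  have hsplit := dist_triangle4 (γ 0) (γ s) (γ t) (γ d)
  have h0s := hle h0 hs
  have htd := hle ht hd'
  rw [abs_of_nonpos (by linarith [hs.1])] at h0s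
  rw [abs_of_nonpos (by linarith [ht.2])] at htd
  rw [abs_of_nonpos (by linarith)]
  linarith

variable {X Y : Type*} [MetricSpace X] [MetricSpace Y]

/-- Two points are geodesically joined if there is a geodesic from the first to the second, so that
a space is geodesic if any two of its points are. -/
def GeodesicallyJoined (x y : X) : Prop :=
  ∃ γ : ℝ → X, γ 0 = x ∧ γ 1 = y ∧
    ∀ s ∈ Set.Icc (0 : ℝ) 1, ∀ t ∈ Set.Icc (0 : ℝ) 1,
      dist (γ s) (γ t) = |s - t| * dist x y

namespace GeodesicallyJoined

variable {x y p : X}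

lemma iff_exists_lipschitzOnWith_one : GeodesicallyJoined x y ↔
    ∃ γ : ℝ → X, γ 0 = x ∧ γ (dist x y) = y ∧
      LipschitzOnWith 1 γ (Set.Icc 0 (dist x y)) := by
  constructor
  · rintro ⟨γ, h0, h1, hγ⟩
    rcases eq_or_ne x y with rfl | hne
    · exact ⟨fun _ => x, rfl, rfl, (LipschitzWith.const' x).lipschitzOnWith⟩
    have hpos := dist_pos.mpr hne
    have hmem {t} (ht : t ∈ Set.Icc 0 (dist x y)) : t / dist x y ∈ Set.Icc (0 : ℝ) 1 :=
      ⟨div_nonneg ht.1 hpos.le, div_le_one_of_le₀ ht.2 hpos.le⟩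
    refine ⟨fun t => γ (t / dist x y), by simpa using h0, by simpa [hpos.ne'] using h1,
      LipschitzOnWith.of_dist_le_mul fun s hs t ht => ?_⟩
    rw [hγ _ (hmem hs) _ (hmem ht), ← sub_div, abs_div, abs_of_pos hpos,
      div_mul_cancel₀ _ hpos.ne', NNReal.coe_one, one_mul, Real.dist_eq]
  · rintro ⟨γ, h0, h1, hγ⟩
    have hmem {t : ℝ} (ht : t ∈ Set.Icc 0 1) : t * dist x y ∈ Set.Icc 0 (dist x y) :=
      ⟨mul_nonneg ht.1 dist_nonneg, mul_le_of_le_one_left dist_nonneg ht.2⟩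
    refine ⟨fun t => γ (t * dist x y), by simpa using h0, by simpa using h1, fun s hs t ht => ?_⟩
    rw [dist_eq_of_lipschitzOnWith_one (by rw [h0, h1]) hγ (hmem hs) (hmem ht), ← sub_mul, abs_mul,
      abs_of_nonneg dist_nonneg]

lemma map {φ : X → Y} {c : ℝ} (hφ : ∀ a b, dist (φ a) (φ b) = c * dist a b)
    (h : GeodesicallyJoined x y) : GeodesicallyJoined (φ x) (φ y) := by
  obtain ⟨γ, h0, h1, hγ⟩ := h
  refine ⟨φ ∘ γ, congrArg φ h0, congrArg φ h1, fun s hs t ht => ?_⟩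
  simp only [Function.comp_apply, hφ, hγ s hs t ht, mul_left_comm]

lemma map_isometry {φ : X → Y} (hφ : Isometry φ) (h : GeodesicallyJoined x y) :
    GeodesicallyJoined (φ x) (φ y) :=
  h.map (c := 1) fun a b => by rw [hφ.dist_eq, one_mul]

lemma symm (h : GeodesicallyJoined x y) : GeodesicallyJoined y x := by
  obtain ⟨γ, h0, h1, hγ⟩ := h
  refine ⟨fun t => γ (1 - t), by simpa using h1, by simpa using h0, fun s hs t ht => ?_⟩
  rw [hγ _ (Set.Icc.mem_iff_one_sub_mem.mp hs) _ (Set.Icc.mem_iff_one_sub_mem.mp ht), dist_comm y,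
    sub_sub_sub_cancel_left, abs_sub_comm]

lemma trans (hxp : GeodesicallyJoined x p) (hpy : GeodesicallyJoined p y)
    (hd : dist x y = dist x p + dist p y) : GeodesicallyJoined x y := by
  rw [iff_exists_lipschitzOnWith_one] at hxp hpy ⊢
  obtain ⟨γ, hγ0, hγ1, hγ⟩ := hxp
  obtain ⟨σ, hσ0, hσ1, hσ⟩ := hpy
  let τ (t : ℝ) : X := if t ≤ dist x p then γ t else σ (t - dist x p)
  have hτγ : Set.EqOn τ γ (Set.Icc 0 (dist x p)) := fun t ht => if_pos ht.2
  have hτσ {t} (ht : dist x p ≤ t) : τ t = σ (t - dist x p) := by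
    rcases ht.eq_or_lt with rfl | hlt
    · rw [hτγ ⟨dist_nonneg, le_rfl⟩, hγ1, sub_self, hσ0]
    · exact if_neg hlt.not_ge
  refine ⟨τ, by rw [hτγ ⟨le_rfl, dist_nonneg⟩, hγ0], ?_,
    lipschitzOnWith_Icc_union (b := dist x p) ?_ ?_⟩
  · rw [hτσ (hd ▸ le_add_of_nonneg_right dist_nonneg), hd, add_sub_cancel_left, hσ1]
  · exact LipschitzOnWith.of_dist_le_mul fun s hs t ht => by
      simpa only [hτγ hs, hτγ ht] using hγ.dist_le_mul s hs t ht
  · have hmem {t} (ht : t ∈ Set.Icc (dist x p) (dist x y)) :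
        t - dist x p ∈ Set.Icc 0 (dist p y) :=
      ⟨sub_nonneg.mpr ht.1, by linarith [ht.2]⟩
    exact LipschitzOnWith.of_dist_le_mul fun s hs t ht => by
      simpa only [hτσ hs.1, hτσ ht.1, dist_sub_right] using
        hσ.dist_le_mul _ (hmem hs) _ (hmem ht)

end GeodesicallyJoined

lemma IsGeodesicSpace.of_isometryEquiv (hX : IsGeodesicSpace X) (e : X ≃ᵢ Y) :
    IsGeodesicSpace Y :=
  e.surjective.forall₂.mpr fun x y => GeodesicallyJoined.map_isometry e.isometry (hX x y)

lemma IsGeodesicSpace.prod (hX : IsGeodesicSpace X) (hY : IsGeodesicSpace Y) :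
    IsGeodesicSpace (X × Y) := by
  rintro ⟨x, y⟩ ⟨x', y'⟩
  obtain ⟨γ, hγ0, hγ1, hγ⟩ := hX x x'
  obtain ⟨σ, hσ0, hσ1, hσ⟩ := hY y y'
  refine ⟨fun t => (γ t, σ t), by simp [hγ0, hσ0], by simp [hγ1, hσ1], fun s hs t ht => ?_⟩
  rw [Prod.dist_eq, Prod.dist_eq, hγ s hs t ht, hσ s hs t ht, mul_max_of_nonneg _ _ (abs_nonneg _)]

lemma isGeodesicSpace_of_subsingleton [Subsingleton X] : IsGeodesicSpace X := fun x y =>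
  ⟨fun _ => x, rfl, Subsingleton.elim _ _, fun _ _ _ _ => by simp [Subsingleton.elim x y]⟩

lemma isGeodesicSpace_of_convex {E : Type*} [NormedAddCommGroup E] [NormedSpace ℝ E] {s : Set E}
    (hs : Convex ℝ s) : IsGeodesicSpace s := by
  rintro ⟨x, hx⟩ ⟨y, hy⟩
  refine ⟨fun t => ⟨AffineMap.lineMap x y (Set.projIcc (0 : ℝ) 1 zero_le_one t : ℝ),
    hs.lineMap_mem hx hy (Subtype.prop _)⟩, by simp, by simp, fun t ht u hu => ?_⟩
  rw [Subtype.dist_eq, dist_lineMap_lineMap, Set.projIcc_of_mem _ ht, Set.projIcc_of_mem _ hu,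
    Real.dist_eq, Subtype.dist_eq]

end Geodesics

section PathConnected

open TopologicalSpace

variable {X : Type*} [MetricSpace X] [CompactSpace X] [Nonempty X]

lemma toGHSpace_mem_ghGeodesic (hX : IsGeodesicSpace X) : toGHSpace X ∈ GHGeodesic := by
  obtain ⟨e⟩ := toGHSpace_eq_toGHSpace_iff_isometryEquiv.mp (toGHSpace X).toGHSpace_rep
  exact hX.of_isometryEquiv e.symm

lemma toGHSpace_eq_of_range_eq {Y : Type*} [MetricSpace Y] {K : NonemptyCompacts Y} {φ : X → Y}
    (hφ : Isometry φ) (hK : Set.range φ = K) : K.toGHSpace = toGHSpace X := by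
  have e := hφ.isometryEquivOnRange
  rw [hK] at e
  exact toGHSpace_eq_toGHSpace_iff_isometryEquiv.mpr ⟨e.symm⟩

variable {E : Type*} [NormedAddCommGroup E] [NormedSpace ℝ E]

lemma IsGeodesicSpace.map_smul {K : NonemptyCompacts E} (hK : IsGeodesicSpace K) (c : ℝ) :
    IsGeodesicSpace (K.map (c • ·) (by fun_prop)) := by
  rintro ⟨_, x, hx, rfl⟩ ⟨_, y, hy, rfl⟩
  let φ (z : K) : K.map (c • ·) (by fun_prop) := ⟨c • z, Set.mem_image_of_mem _ z.2⟩
  have hφ (a b : K) : dist (φ a) (φ b) = ‖c‖ * dist a b := dist_smul₀ c (a : E) b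
  exact GeodesicallyJoined.map hφ (hK ⟨x, hx⟩ ⟨y, hy⟩)

lemma continuous_toGHSpace_map_smul (K : NonemptyCompacts E) :
    Continuous fun c : ℝ => (K.map (c • ·) (by fun_prop)).toGHSpace :=
  toGHSpace_continuous.comp <| continuous_const.nonemptyCompacts_map' continuous_smul

lemma joined_toGHSpace_punit {K : NonemptyCompacts E} (hK : IsGeodesicSpace K) :
    JoinedIn GHGeodesic (toGHSpace PUnit.{1}) K.toGHSpace := by
  refine ⟨⟨⟨fun c : unitInterval => (K.map ((c : ℝ) • ·) (by fun_prop)).toGHSpace,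
    (continuous_toGHSpace_map_smul K).comp continuous_subtype_val⟩, ?_, ?_⟩,
    fun c => toGHSpace_mem_ghGeodesic (hK.map_smul c)⟩
  · refine toGHSpace_eq_of_range_eq (φ := fun _ : PUnit.{1} => (0 : E)) (isometry_subsingleton) ?_
    simp [K.nonempty.image_const]
  · simp only [Set.Icc.coe_one, one_smul]
    congr 1
    exact SetLike.coe_injective (Set.image_id _)

theorem pathConnectedSpace_ghGeodesic : PathConnectedSpace ↥GHGeodesic := by
  refine isPathConnected_iff_pathConnectedSpace.mp
    ⟨_, toGHSpace_mem_ghGeodesic (X := PUnit) isGeodesicSpace_of_subsingleton,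
      fun {p} hp => ?_⟩
  have hK : IsGeodesicSpace (NonemptyCompacts.kuratowskiEmbedding p.Rep) :=
    IsGeodesicSpace.of_isometryEquiv hp (kuratowskiEmbedding.isometry p.Rep).isometryEquivOnRange
  have hp_eq : (NonemptyCompacts.kuratowskiEmbedding p.Rep).toGHSpace = p :=
    (toGHSpace_eq_of_range_eq (kuratowskiEmbedding.isometry p.Rep) rfl).trans p.toGHSpace_rep
  exact hp_eq ▸ joined_toGHSpace_punit hK

end PathConnected

section WhiskerLengths

variable {X Y : Type*} [MetricSpace X] [MetricSpace Y]

/-- The distance to `q` determines the points of the ball of radius `r` around `q`. This holds at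
the free end of a segment of length at least `r` glued to a space at its other end, and is used to
recognise such segments metrically. -/
def DistInjOnBall (q : X) (r : ℝ) : Prop := (Metric.ball q r).InjOn (dist q)

lemma DistInjOnBall.of_isometry {φ : X → Y} (hφ : Isometry φ) {q : X} {r : ℝ}
    (h : DistInjOnBall (φ q) r) : DistInjOnBall q r := by
  intro y hy z hz hyz
  rw [← hφ.dist_eq, ← hφ.dist_eq q z] at hyz
  rw [← hφ.preimage_ball q r] at hy hz
  exact hφ.injective (h hy hz hyz)

lemma distInjOnBall_apply_iff (e : X ≃ᵢ Y) {q : X} {r : ℝ} :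
    DistInjOnBall (e q) r ↔ DistInjOnBall q r := by
  refine ⟨.of_isometry e.isometry, fun h => .of_isometry e.symm.isometry ?_⟩
  rwa [e.symm_apply_apply]

/-- The lengths of the maximal whiskers of a metric space. The free end of a whisker of length `L`
is a point `q` for which `L` is the largest radius with `DistInjOnBall q L`. -/
def whiskerLengths (X : Type*) [MetricSpace X] : Set NNReal :=
  {L | 0 < L ∧ ∃ q : X, IsGreatest {r | DistInjOnBall q r} (L : ℝ)}

lemma whiskerLengths_congr (e : X ≃ᵢ Y) : whiskerLengths X = whiskerLengths Y := by
  ext L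
  simp only [whiskerLengths, Set.mem_ofPred_eq,
    e.surjective.exists (p := fun q => IsGreatest {r | DistInjOnBall q r} (L : ℝ)),
    distInjOnBall_apply_iff]

/-- Arbitrarily close to each point `q` there are two distinct points at the same distance from `q`;
in particular no point of `X` looks like the free end of a segment. -/
def Forked (X : Type*) [MetricSpace X] : Prop :=
  ∀ q : X, ∀ r > 0, ¬ DistInjOnBall q r

lemma exists_dist_eq_of_le {X : Type*} [PseudoMetricSpace X] [PreconnectedSpace X] {x y : X}
    {u : ℝ} (hu : 0 ≤ u) (huy : u ≤ dist x y) : ∃ z, dist x z = u :=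
  intermediate_value_univ x y (continuous_const.dist continuous_id)
    ⟨(dist_self x).trans_le hu, huy⟩

lemma forked_prod [PreconnectedSpace X] [Nontrivial X] [PreconnectedSpace Y] [Nontrivial Y] :
    Forked (X × Y) := by
  rintro ⟨x, y⟩ r hr hinj
  obtain ⟨x', hx'⟩ := exists_ne x
  obtain ⟨y', hy'⟩ := exists_ne y
  obtain ⟨u, hu, hlt⟩ := exists_between
    (lt_min hr (lt_min (dist_pos.mpr hx'.symm) (dist_pos.mpr hy'.symm)))
  simp only [lt_min_iff] at hlt
  obtain ⟨hur, hux, huy⟩ := hlt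
  obtain ⟨v, hv⟩ := exists_dist_eq_of_le hu.le hux.le
  obtain ⟨w, hw⟩ := exists_dist_eq_of_le hu.le huy.le
  have hdist_v : dist (x, y) (v, y) = u := by simp [Prod.dist_eq, hv, hu.le]
  have hdist_w : dist (x, y) (x, w) = u := by simp [Prod.dist_eq, hw, hu.le]
  have heq : v = x := congrArg Prod.fst <| hinj (Metric.mem_ball'.mpr (hdist_v.trans_lt hur))
    (Metric.mem_ball'.mpr (hdist_w.trans_lt hur)) (hdist_v.trans hdist_w.symm)
  rw [heq, dist_self] at hv
  exact hu.ne hv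

lemma Forked.prod_left (hY : Forked Y) : Forked (X × Y) := by
  rintro ⟨x, y⟩ r hr hinj
  have hφ : Isometry (Prod.mk x : Y → X × Y) := .of_dist_eq fun a b => by simp [Prod.dist_eq]
  exact hY y r hr (.of_isometry hφ hinj)

end WhiskerLengths

section Wedge

open TopologicalSpace NNReal

variable {C ι : Type*}

/-- The ambient space of a wedge of `C` with segments indexed by `ι`; the `ℓ¹` metric makes paths
through the gluing point geodesic. -/
abbrev WedgeAmbient (C ι : Type*) : Type _ := WithLp 1 (C × PiLp 1 fun _ : ι => ℝ)

/-- The inclusion of `C` into the ambient space of its wedges. -/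
def ambientCore (ι : Type*) (c : C) : WedgeAmbient C ι := WithLp.toLp 1 (c, 0)

/-- The axis number `j` through the point `p` of `C`. -/
def ambientLeg [DecidableEq ι] (p : C) (j : ι) (t : ℝ) : WedgeAmbient C ι :=
  WithLp.toLp 1 (p, PiLp.single 1 j t)

lemma ambientLeg_zero [DecidableEq ι] (p : C) (j : ι) : ambientLeg p j 0 = ambientCore ι p := by
  simp [ambientLeg, ambientCore]

variable [MetricSpace C] [Fintype ι]

lemma dist_wedgeAmbient (x y : WedgeAmbient C ι) :
    dist x y = dist x.fst y.fst + dist x.snd y.snd := by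
  rw [WithLp.prod_dist_eq_add (by simp)]
  simp

lemma isometry_ambientCore : Isometry (ambientCore ι : C → WedgeAmbient C ι) :=
  .of_dist_eq fun c c' => by
    rw [dist_wedgeAmbient]
    simp [ambientCore]

variable [DecidableEq ι]

lemma dist_ambientCore_ambientLeg (c p : C) (j : ι) {t : ℝ} (ht : 0 ≤ t) :
    dist (ambientCore ι c) (ambientLeg p j t) = dist c p + t := by
  rw [dist_wedgeAmbient]
  simp [ambientCore, ambientLeg, dist_zero_left, abs_of_nonneg ht]

lemma isometry_ambientLeg (p : C) (j : ι) : Isometry (ambientLeg p j) :=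
  .of_dist_eq fun s t => by
    rw [dist_wedgeAmbient]
    simp [ambientLeg]

lemma dist_ambientLeg_of_ne (p : C) {i j : ι} (hij : i ≠ j) {s t : ℝ} (hs : 0 ≤ s) (ht : 0 ≤ t) :
    dist (ambientLeg p i s) (ambientLeg p j t) = s + t := by
  have hsum : dist (PiLp.single 1 i s : PiLp 1 fun _ : ι => ℝ) (PiLp.single 1 j t) = s + t := by
    rw [PiLp.dist_eq_of_L1, Finset.sum_eq_add i j hij]
    · simp [Real.dist_eq, hij, hij.symm, abs_of_nonneg hs, abs_of_nonneg ht]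
    · intro k _ hk
      simp [hk.1, hk.2]
    all_goals simp
  rw [dist_wedgeAmbient]
  simp [ambientLeg, hsum]

variable [CompactSpace C]

/-- The wedge of `C` with segments of lengths `len j`, all glued at the point `p` of `C`. -/
def wedge (p : C) (len : ι → ℝ≥0) : NonemptyCompacts (WedgeAmbient C ι) where
  carrier := Set.range (ambientCore ι) ∪ ⋃ j, ambientLeg p j '' Set.Icc 0 (len j)
  isCompact' := (isCompact_range isometry_ambientCore.continuous).union
    (isCompact_iUnion fun j => isCompact_Icc.image (isometry_ambientLeg p j).continuous)
  nonempty' := ⟨ambientCore ι p, .inl ⟨p, rfl⟩⟩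

lemma mem_wedge {p : C} {len : ι → ℝ≥0} {z : WedgeAmbient C ι} :
    z ∈ wedge p len ↔
      (∃ c, ambientCore ι c = z) ∨ ∃ j, ∃ t ∈ Set.Icc (0 : ℝ) (len j), ambientLeg p j t = z := by
  change z ∈ Set.range (ambientCore ι) ∪ ⋃ j, ambientLeg p j '' Set.Icc 0 (len j) ↔ _
  simp only [Set.mem_union, Set.mem_range, Set.mem_iUnion, Set.mem_image]

lemma exists_mem_wedge_dist_le (p : C) (len len' : ι → ℝ≥0) {x : WedgeAmbient C ι}
    (hx : x ∈ wedge p len) : ∃ y ∈ wedge p len', dist x y ≤ dist len len' := by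
  rcases mem_wedge.mp hx with ⟨c, rfl⟩ | ⟨j, t, ht, rfl⟩
  · exact ⟨_, mem_wedge.mpr (.inl ⟨c, rfl⟩), (dist_self _).trans_le dist_nonneg⟩
  · refine ⟨ambientLeg p j (min t (len' j)),
      mem_wedge.mpr (.inr ⟨j, _, ⟨le_min ht.1 (len' j).2, min_le_right _ _⟩, rfl⟩), ?_⟩
    calc dist (ambientLeg p j t) (ambientLeg p j (min t (len' j)))
        = |t - min t (len' j)| := (isometry_ambientLeg p j).dist_eq _ _
      _ ≤ |(len j : ℝ) - len' j| := by
          rcases min_cases t (len' j : ℝ) with ⟨hmin, -⟩ | ⟨hmin, hlt⟩ <;> rw [hmin]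
          · simp
          · exact abs_le_abs_of_nonneg (by linarith) (by linarith [ht.2])
      _ ≤ dist len len' := dist_le_pi_dist len len' j

lemma lipschitzWith_wedge (p : C) : LipschitzWith 1 (wedge p : (ι → ℝ≥0) → _) := by
  refine LipschitzWith.of_dist_le_mul fun len len' => ?_
  rw [NNReal.coe_one, one_mul, Metric.NonemptyCompacts.dist_eq]
  refine Metric.hausdorffDist_le_of_mem_dist dist_nonneg
    (fun x hx => exists_mem_wedge_dist_le p len len' hx) fun x hx => ?_
  rw [dist_comm]
  exact exists_mem_wedge_dist_le p len' len hx

lemma toGHSpace_wedge_zero [Nonempty C] (p : C) :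
    (wedge p (0 : ι → ℝ≥0)).toGHSpace = toGHSpace C := by
  refine toGHSpace_eq_of_range_eq (isometry_ambientCore (ι := ι)) (Set.ext fun z => ?_)
  rw [SetLike.mem_coe, mem_wedge, Set.mem_range]
  refine ⟨.inl, fun hz => hz.elim id ?_⟩
  rintro ⟨j, t, ht, rfl⟩
  obtain rfl : t = 0 := ht.2.antisymm ht.1
  exact ⟨p, (ambientLeg_zero p j).symm⟩

lemma dist_toGHSpace_wedge_le [Nonempty C] (p : C) {len : ι → ℝ≥0} {δ : ℝ≥0}
    (hlen : ∀ j, len j ≤ δ) : dist (wedge p len).toGHSpace (toGHSpace C) ≤ δ := by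
  rw [← toGHSpace_wedge_zero (ι := ι) p]
  calc _ ≤ dist (wedge p len) (wedge p 0) := ghDist_le_nonemptyCompacts_dist _ _
    _ ≤ dist len 0 := by simpa using (lipschitzWith_wedge p).dist_le_mul len 0
    _ ≤ δ := (dist_pi_le_iff δ.2).mpr fun j => by simpa [NNReal.dist_eq] using hlen j

variable (p : C) (len : ι → ℝ≥0)

/-- The inclusion of `C` into a wedge. -/
def wedgeCore (c : C) : wedge p len := ⟨ambientCore ι c, mem_wedge.mpr (.inl ⟨c, rfl⟩)⟩

/-- The inclusion of the `j`-th segment into a wedge. -/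
def wedgeLeg (j : ι) (t : Set.Icc (0 : ℝ) (len j)) : wedge p len :=
  ⟨ambientLeg p j t, mem_wedge.mpr (.inr ⟨j, t, t.2, rfl⟩)⟩

variable {p len}

lemma wedge_cases (z : wedge p len) :
    (∃ c, wedgeCore p len c = z) ∨ ∃ j t, wedgeLeg p len j t = z := by
  obtain ⟨z, hz⟩ := z
  rcases mem_wedge.mp hz with ⟨c, rfl⟩ | ⟨j, t, ht, rfl⟩
  · exact .inl ⟨c, rfl⟩
  · exact .inr ⟨j, ⟨t, ht⟩, rfl⟩

lemma wedgeLeg_zero {j : ι} (h0 : (0 : ℝ) ∈ Set.Icc (0 : ℝ) (len j)) :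
    wedgeLeg p len j ⟨0, h0⟩ = wedgeCore p len p :=
  Subtype.ext (ambientLeg_zero p j)

lemma isometry_wedgeCore : Isometry (wedgeCore p len) := isometry_ambientCore

lemma isometry_wedgeLeg (j : ι) : Isometry (wedgeLeg p len j) :=
  (isometry_ambientLeg p j).comp isometry_subtype_coe

lemma dist_wedgeCore_wedgeLeg (c : C) {j : ι} (t : Set.Icc (0 : ℝ) (len j)) :
    dist (wedgeCore p len c) (wedgeLeg p len j t) = dist c p + t :=
  dist_ambientCore_ambientLeg c p j t.2.1

lemma dist_wedgeLeg_of_ne {i j : ι} (hij : i ≠ j) (s : Set.Icc (0 : ℝ) (len i))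
    (t : Set.Icc (0 : ℝ) (len j)) : dist (wedgeLeg p len i s) (wedgeLeg p len j t) = s + t :=
  dist_ambientLeg_of_ne p hij s.2.1 t.2.1

lemma isGeodesicSpace_wedge (hC : IsGeodesicSpace C) : IsGeodesicSpace (wedge p len) := by
  have hcore (c c') : GeodesicallyJoined (wedgeCore p len c) (wedgeCore p len c') :=
    .map_isometry isometry_wedgeCore (hC c c')
  have hleg (j s t) : GeodesicallyJoined (wedgeLeg p len j s) (wedgeLeg p len j t) :=
    .map_isometry (isometry_wedgeLeg j) (isGeodesicSpace_of_convex (convex_Icc _ _) s t)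
  have hbase (j t) : GeodesicallyJoined (wedgeCore p len p) (wedgeLeg p len j t) := by
    rw [← wedgeLeg_zero ⟨le_rfl, (len j).2⟩]
    exact hleg j _ t
  have hcore_leg (c j t) : GeodesicallyJoined (wedgeCore p len c) (wedgeLeg p len j t) :=
    (hcore c p).trans (hbase j t) <| by
      rw [dist_wedgeCore_wedgeLeg, dist_wedgeCore_wedgeLeg, isometry_wedgeCore.dist_eq, dist_self,
        zero_add]
  intro x y
  rcases wedge_cases x with ⟨c, rfl⟩ | ⟨i, s, rfl⟩ <;>
    rcases wedge_cases y with ⟨c', rfl⟩ | ⟨j, t, rfl⟩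
  · exact hcore c c'
  · exact hcore_leg c j t
  · exact (hcore_leg c' i s).symm
  · rcases eq_or_ne i j with rfl | hij
    · exact hleg i s t
    · refine (hbase i s).symm.trans (hbase j t) ?_
      rw [dist_wedgeLeg_of_ne hij, dist_comm _ (wedgeCore p len p), dist_wedgeCore_wedgeLeg,
        dist_wedgeCore_wedgeLeg, dist_self, zero_add, zero_add]

variable (p len) in
/-- The free end of the `j`-th segment of a wedge. -/
def wedgeEnd (j : ι) : wedge p len := wedgeLeg p len j ⟨len j, (len j).2, le_rfl⟩

lemma dist_wedgeEnd_wedgeCore (j : ι) (c : C) :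
    dist (wedgeEnd p len j) (wedgeCore p len c) = dist p c + len j := by
  rw [dist_comm, wedgeEnd, dist_wedgeCore_wedgeLeg, dist_comm]

lemma exists_eq_wedgeLeg_of_dist_wedgeEnd_lt {j : ι} {y : wedge p len}
    (hy : dist (wedgeEnd p len j) y < len j) : ∃ t, wedgeLeg p len j t = y := by
  rcases wedge_cases y with ⟨c, rfl⟩ | ⟨i, t, rfl⟩
  · rw [dist_wedgeEnd_wedgeCore] at hy
    linarith [dist_nonneg (x := p) (y := c)]
  · rcases eq_or_ne j i with rfl | hij
    · exact ⟨t, rfl⟩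
    · rw [wedgeEnd, dist_wedgeLeg_of_ne hij] at hy
      linarith [t.2.1]

lemma distInjOnBall_wedgeEnd (j : ι) : DistInjOnBall (wedgeEnd p len j) (len j) := by
  intro y hy z hz hyz
  obtain ⟨s, rfl⟩ := exists_eq_wedgeLeg_of_dist_wedgeEnd_lt (Metric.mem_ball'.mp hy)
  obtain ⟨t, rfl⟩ := exists_eq_wedgeLeg_of_dist_wedgeEnd_lt (Metric.mem_ball'.mp hz)
  have hdist (t : Set.Icc (0 : ℝ) (len j)) :
      dist (wedgeEnd p len j) (wedgeLeg p len j t) = len j - t := by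
    rw [wedgeEnd, (isometry_wedgeLeg j).dist_eq, Subtype.dist_eq, Real.dist_eq,
      abs_of_nonneg (sub_nonneg.mpr t.2.2)]
  rw [hdist, hdist, sub_right_inj] at hyz
  rw [Subtype.ext hyz]

lemma Forked.isGreatest_distInjOnBall_wedgeEnd (hC : Forked C) (j : ι) :
    IsGreatest {r | DistInjOnBall (wedgeEnd p len j) r} (len j) := by
  refine ⟨distInjOnBall_wedgeEnd j, fun r hr => ?_⟩
  by_contra! hlt
  have hmem {c} (hc : c ∈ Metric.ball p (r - len j)) :
      wedgeCore p len c ∈ Metric.ball (wedgeEnd p len j) r := by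
    rw [Metric.mem_ball', dist_wedgeEnd_wedgeCore]
    linarith [Metric.mem_ball'.mp hc]
  refine hC p (r - len j) (sub_pos.mpr hlt) fun c hc c' hc' hcc' => ?_
  refine isometry_wedgeCore.injective (hr (hmem hc) (hmem hc') ?_)
  rw [dist_wedgeEnd_wedgeCore, dist_wedgeEnd_wedgeCore, hcc']

lemma Forked.not_distInjOnBall_wedgeCore (hC : Forked C) (c : C) {r : ℝ} (hr : 0 < r) :
    ¬ DistInjOnBall (wedgeCore p len c) r := fun h =>
  hC c r hr (h.of_isometry isometry_wedgeCore)

lemma not_distInjOnBall_of_mem_Ioo {a b t r : ℝ} (ht : t ∈ Set.Ioo a b) (hr : 0 < r) :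
    ¬ DistInjOnBall (⟨t, Set.Ioo_subset_Icc_self ht⟩ : Set.Icc a b) r := by
  intro hinj
  obtain ⟨u, hu, hlt⟩ := exists_between
    (lt_min hr (lt_min (sub_pos.mpr ht.1) (sub_pos.mpr ht.2)))
  simp only [lt_min_iff] at hlt
  obtain ⟨hur, hua, hub⟩ := hlt
  have hsub : dist t (t - u) = u := by rw [Real.dist_eq, sub_sub_cancel, abs_of_pos hu]
  have hadd : dist t (t + u) = u := by rw [dist_self_add_right, Real.norm_of_nonneg hu.le]
  have heq := @hinj ⟨t - u, by linarith, by linarith [ht.2]⟩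
    (Metric.mem_ball'.mpr (hsub.trans_lt hur)) ⟨t + u, by linarith [ht.1], by linarith⟩
    (Metric.mem_ball'.mpr (hadd.trans_lt hur)) (hsub.trans hadd.symm)
  linarith [Subtype.ext_iff.mp heq]

lemma Forked.eq_wedgeEnd_of_distInjOnBall (hC : Forked C) {q : wedge p len} {r : ℝ} (hr : 0 < r)
    (hq : DistInjOnBall q r) : ∃ j, q = wedgeEnd p len j := by
  rcases wedge_cases q with ⟨c, rfl⟩ | ⟨j, ⟨t, ht⟩, rfl⟩
  · exact absurd hq (hC.not_distInjOnBall_wedgeCore c hr)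
  rcases ht.1.eq_or_lt with rfl | hpos
  · rw [wedgeLeg_zero] at hq
    exact absurd hq (hC.not_distInjOnBall_wedgeCore p hr)
  rcases ht.2.eq_or_lt with rfl | hlt
  · exact ⟨j, rfl⟩
  · exact absurd (hq.of_isometry (isometry_wedgeLeg j))
      (not_distInjOnBall_of_mem_Ioo ⟨hpos, hlt⟩ hr)

theorem Forked.whiskerLengths_wedge (hC : Forked C) (hlen : ∀ j, 0 < len j) :
    whiskerLengths (wedge p len) = Set.range len := by
  refine Set.Subset.antisymm ?_ (Set.range_subset_iff.mpr fun j =>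
    ⟨hlen j, _, hC.isGreatest_distInjOnBall_wedgeEnd j⟩)
  rintro L ⟨hL, q, hq⟩
  obtain ⟨j, rfl⟩ := hC.eq_wedgeEnd_of_distInjOnBall (NNReal.coe_pos.mpr hL) hq.1
  exact ⟨j, NNReal.coe_injective ((hC.isGreatest_distInjOnBall_wedgeEnd j).unique hq)⟩

end Wedge

section InfiniteDimension

open NNReal

lemma dist_toGHSpace_prod_le {X Z : Type*} [MetricSpace X] [CompactSpace X] [Nonempty X]
    [MetricSpace Z] [CompactSpace Z] [Nonempty Z] {z₀ : Z} {δ : ℝ} (hδ : ∀ z, dist z z₀ ≤ δ) :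
    dist (toGHSpace (X × Z)) (toGHSpace X) ≤ δ := by
  have hδ0 : 0 ≤ δ := dist_nonneg.trans (hδ z₀)
  have hφ : Isometry fun x : X => (x, z₀) := .of_dist_eq fun x x' => by simp [Prod.dist_eq]
  refine (ghDist_le_hausdorffDist isometry_id hφ).trans
    (Metric.hausdorffDist_le_of_mem_dist hδ0 ?_ ?_)
  · rintro _ ⟨⟨x, z⟩, rfl⟩
    exact ⟨_, ⟨x, rfl⟩, by simpa [Prod.dist_eq, hδ0] using hδ z⟩
  · rintro _ ⟨x, rfl⟩
    exact ⟨(x, z₀), ⟨(x, z₀), rfl⟩, by simpa using hδ0⟩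

lemma exists_forked_dist_toGHSpace_lt {P : GHSpace} (hP : P ∈ GHGeodesic) {ε : ℝ} (hε : 0 < ε) :
    ∃ (C : Type) (_ : MetricSpace C) (_ : CompactSpace C) (_ : Nonempty C),
      IsGeodesicSpace C ∧ Forked C ∧ dist (toGHSpace C) P < ε := by
  let I := Set.Icc (0 : ℝ) (ε / 2)
  have hI : IsGeodesicSpace I := isGeodesicSpace_of_convex (convex_Icc _ _)
  have : PreconnectedSpace I := Subtype.preconnectedSpace isPreconnected_Icc
  have : Nontrivial I := Set.nontrivial_coe_sort.mpr
    ⟨0, ⟨le_rfl, (half_pos hε).le⟩, ε / 2, ⟨(half_pos hε).le, le_rfl⟩, (half_pos hε).ne⟩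
  let o : I := ⟨0, le_rfl, (half_pos hε).le⟩
  have ho (s : I) : dist s o ≤ ε / 2 := by
    rw [Subtype.dist_eq, dist_zero_right, Real.norm_of_nonneg s.2.1]
    exact s.2.2
  have hdist : dist (toGHSpace (P.Rep × I × I)) (toGHSpace P.Rep) ≤ ε / 2 :=
    dist_toGHSpace_prod_le (z₀ := (o, o)) fun z => max_le (ho z.1) (ho z.2)
  rw [P.toGHSpace_rep] at hdist
  exact ⟨P.Rep × I × I, inferInstance, inferInstance, inferInstance,
    IsGeodesicSpace.prod hP (hI.prod hI), forked_prod.prod_left, by linarith⟩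

variable {N : ℕ}

/-- Lengths in `[κ * (2 * j + 1), κ * (2 * j + 2)]` encoding the points of the unit cube: since
these intervals are disjoint, the unordered set of lengths determines the point. -/
noncomputable def cubeLengths (κ : ℝ≥0) (a : Fin N → unitInterval) (j : Fin N) : ℝ≥0 :=
  κ * (2 * j + 1 + unitInterval.toNNReal (a j))

lemma continuous_cubeLengths (κ : ℝ≥0) :
    Continuous (cubeLengths κ : (Fin N → unitInterval) → Fin N → ℝ≥0) := by
  unfold cubeLengths
  fun_prop

lemma cubeLengths_pos {κ : ℝ≥0} (hκ : 0 < κ) (a : Fin N → unitInterval) (j : Fin N) :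
    0 < cubeLengths κ a j := by
  unfold cubeLengths
  positivity

lemma cubeLengths_le (κ : ℝ≥0) (a : Fin N → unitInterval) (j : Fin N) :
    cubeLengths κ a j ≤ 2 * N * κ := by
  have hj : (j : ℝ≥0) + 1 ≤ N := mod_cast j.isLt
  have ha : unitInterval.toNNReal (a j) ≤ 1 := (a j).2.2
  calc cubeLengths κ a j ≤ κ * (2 * j + 1 + 1) := by unfold cubeLengths; gcongr
    _ = 2 * (j + 1) * κ := by ring
    _ ≤ 2 * N * κ := by gcongr

lemma injective_range_cubeLengths {κ : ℝ≥0} (hκ : 0 < κ) :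
    Function.Injective fun a : Fin N → unitInterval => Set.range (cubeLengths κ a) := by
  intro a b hab
  funext j
  obtain ⟨i, hi⟩ : cubeLengths κ a j ∈ Set.range (cubeLengths κ b) :=
    hab.subset (Set.mem_range_self j)
  have heq : (2 * i + 1 + b i : ℝ) = 2 * j + 1 + a j := by
    simpa using congrArg NNReal.toReal (mul_left_cancel₀ hκ.ne' hi)
  have hij : i = j := by
    have hlt : (i : ℝ) < j + 1 := by linarith [(b i).2.1, (a j).2.2]
    have hlt' : (j : ℝ) < i + 1 := by linarith [(a j).2.1, (b i).2.2]
    norm_cast at hlt hlt'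
    lia
  subst hij
  exact Subtype.ext (by linarith)

theorem exists_continuous_injective_of_isOpen {U : Set ↥GHGeodesic} (hU : IsOpen U)
    (hne : U.Nonempty) (N : ℕ) :
    ∃ f : (Fin N → unitInterval) → U, Continuous f ∧ Function.Injective f := by
  obtain ⟨P, hPU⟩ := hne
  obtain ⟨ε, hε, hball⟩ := Metric.isOpen_iff.mp hU P hPU
  obtain ⟨C, _, _, ⟨p⟩, hC, hfork, hCP⟩ := exists_forked_dist_toGHSpace_lt P.2 (half_pos hε)
  have : Nonempty C := ⟨p⟩
  obtain ⟨κ, hκ, hκε⟩ := exists_pos_mul_lt (half_pos hε) (2 * N : ℝ)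
  lift κ to ℝ≥0 using hκ.le
  rw [NNReal.coe_pos] at hκ
  let W (a : Fin N → unitInterval) := wedge p (cubeLengths κ a)
  have hW : Continuous W :=
    (lipschitzWith_wedge (ι := Fin N) p).continuous.comp (continuous_cubeLengths κ)
  have hnear (a) : dist (W a).toGHSpace P < ε := by
    have hle := dist_toGHSpace_wedge_le p (cubeLengths_le κ a)
    push_cast at hle
    linarith [dist_triangle (W a).toGHSpace (toGHSpace C) P]
  refine ⟨fun a => ⟨⟨(W a).toGHSpace, toGHSpace_mem_ghGeodesic (isGeodesicSpace_wedge hC)⟩,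
    hball (hnear a)⟩, ?_, fun a b hab => injective_range_cubeLengths hκ ?_⟩
  · exact ((toGHSpace_continuous.comp hW).subtype_mk _).subtype_mk _
  · have hab' : toGHSpace (W a) = toGHSpace (W b) := congrArg (fun x : U => (x : GHSpace)) hab
    obtain ⟨e⟩ := toGHSpace_eq_toGHSpace_iff_isometryEquiv.mp hab'
    simpa only [W, hfork.whiskerLengths_wedge (cubeLengths_pos hκ _)] using whiskerLengths_congr e

end InfiniteDimension

/-- The set `𝒢` of all compact geodesic metric spaces is
path-connected as a subspace of the Gromov–Hausdorff space, and every nonempty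
open subset of `𝒢` has infinite covering dimension. -/
theorem statement6 :
    PathConnectedSpace ↥GHGeodesic ∧
    ∀ U : Set ↥GHGeodesic, IsOpen U → U.Nonempty →
      ¬ ∃ n : ℕ, CovDimLE ↥U n := by
  refine ⟨pathConnectedSpace_ghGeodesic, fun U hU hne ⟨n, hn⟩ => ?_⟩
  obtain ⟨f, hf, hinj⟩ := exists_continuous_injective_of_isOpen hU hne (n + 1)
  exact not_covDimLE_of_continuous_injective hf hinj hn
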